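/- Let A be a monomial k-algebra such that no two distinct circuits of the CPS graph Γ(A) share a vertex. Then GKdim(E(A)) equals the maximal number of distinct circuits contained in any single walk of Γ(A) that begins at a vertex of 𝔊_0 (counting each circuit once regardless of multiplicity). -/

import Mathlib

/- Combinatorial model of a monomial algebra A = T(V)/I and its CPS graph Γ(A).
   Monomials of the tensor algebra on generators indexed by σ are lists over σ;
   the tensor product w ⊗ m is list concatenation w ++ m. -/

namespace CPS

/-- Monomials of the tensor algebra: words in the generators. -/
abbrev Mon (σ : Type) := List σ

/-- A monomial ideal, given by finitely many monomial generators of degree ≥ 2. -/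
structure MonIdeal (σ : Type) where
  gens : Finset (Mon σ)
  deg2 : ∀ r ∈ gens, 2 ≤ r.length

variable {σ : Type}

/-- Membership in the two-sided monomial ideal generated by `gens`. -/
def MonIdeal.Mem (I : MonIdeal σ) (m : Mon σ) : Prop :=
  ∃ a r b, r ∈ I.gens ∧ m = a ++ r ++ b

/-- 𝔄_m : the set of minimal left annihilating monomials of m
    (w ∉ I, w ⊗ m ∈ I, and no proper suffix of w left-annihilates m). -/
def Ann (I : MonIdeal σ) (m : Mon σ) : Set (Mon σ) :=
  {w | ¬ I.Mem m ∧ ¬ I.Mem w ∧ I.Mem (w ++ m) ∧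
    ∀ w' : Mon σ, w' <:+ w → w' ≠ w → ¬ I.Mem (w' ++ m)}

/-- Directed edges of the CPS graph Γ(A): m₁ → m₂ iff m₂ ∈ 𝔄_{m₁}. -/
def Edge (I : MonIdeal σ) (m₁ m₂ : Mon σ) : Prop := m₂ ∈ Ann I m₁

/-- The vertex sets 𝔊_i : 𝔊_0 = degree-1 generators, 𝔊_{i+1} = ⋃_{w ∈ 𝔊_i} 𝔄_w. -/
def Gs (I : MonIdeal σ) : ℕ → Set (Mon σ)
  | 0 => {m | m.length = 1}
  | (i+1) => ⋃ w ∈ Gs I i, Ann I w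

/-- The vertex set 𝔊 = ⋃_i 𝔊_i of the CPS graph. -/
def Vertices (I : MonIdeal σ) : Set (Mon σ) := ⋃ i, Gs I i

/-- A walk of length n in Γ(A), encoded by a function giving the vertices
    p 0, p 1, ..., p n (values beyond n are irrelevant). -/
def IsWalk (I : MonIdeal σ) (n : ℕ) (p : ℕ → Mon σ) : Prop :=
  p 0 ∈ Vertices I ∧ ∀ i < n, Edge I (p i) (p (i+1))

/-- An infinite walk in Γ(A). -/
def InfWalk (I : MonIdeal σ) (p : ℕ → Mon σ) : Prop :=
  p 0 ∈ Vertices I ∧ ∀ i, Edge I (p i) (p (i+1))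

/-- The reversed tensor product p_n ⊗ p_{n-1} ⊗ ⋯ ⊗ p_0 of the vertices of a walk. -/
def tens (n : ℕ) (p : ℕ → Mon σ) : Mon σ :=
  (((List.range (n+1)).map p).reverse).flatten

/-- Equivalence of walks of the same length n: equal reversed tensor products. -/
def WEquiv (n : ℕ) (p q : ℕ → Mon σ) : Prop := tens n p = tens n q

/-- A walk is anchored if its first vertex lies in 𝔊_0 (is a degree-1 generator). -/
def Anchored (p : ℕ → Mon σ) : Prop := (p 0).length = 1

/-- A walk is admissible if it is a walk equivalent to an anchored walk. -/
def Admissible (I : MonIdeal σ) (n : ℕ) (p : ℕ → Mon σ) : Prop :=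
  IsWalk I n p ∧ ∃ q, IsWalk I n q ∧ Anchored q ∧ WEquiv n p q

/-- The walk obtained by deleting the first i vertices. -/
def shift (p : ℕ → Mon σ) (i : ℕ) : ℕ → Mon σ := fun t => p (i + t)

end CPS

namespace CPS
/-- A circuit of length n: a closed walk whose first n vertices are distinct. -/
def IsCircuit {σ : Type} (I : MonIdeal σ) (n : ℕ) (p : ℕ → Mon σ) : Prop :=
  0 < n ∧ IsWalk I n p ∧ p n = p 0 ∧ ∀ i < n, ∀ j < n, p i = p j → i = j

/-- The set of directed edges traversed by a walk of length n. -/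
def edgeSet {σ : Type} (n : ℕ) (p : ℕ → Mon σ) : Set (Mon σ × Mon σ) :=
  {e | ∃ i < n, e = (p i, p (i+1))}

/-- Two distinct circuits of Γ(A) sharing a common vertex. -/
def TwoCircuits {σ : Type} (I : MonIdeal σ) : Prop :=
  ∃ n p m q, IsCircuit I n p ∧ IsCircuit I m q ∧
    (∃ i < n, ∃ j < m, p i = q j) ∧ edgeSet n p ≠ edgeSet m q
/-- Anchored walks of length n in Γ(A), recorded as lists of their vertices. -/
def AWalks {σ : Type} (I : MonIdeal σ) (n : ℕ) : Set (List (Mon σ)) :=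
  {l | ∃ p : ℕ → Mon σ, IsWalk I n p ∧ Anchored p ∧ l = (List.range (n+1)).map p}

/-- The number of anchored walks of length n, i.e. dim Ext_A^{n+1}(k,k). -/
noncomputable def growth {σ : Type} (I : MonIdeal σ) (n : ℕ) : ℕ :=
  Set.ncard (AWalks I n)
/-- The set of (edge sets of) circuits occurring along a walk p of length n. -/
def CircuitsIn {σ : Type} (I : MonIdeal σ) (n : ℕ) (p : ℕ → Mon σ) :
    Set (Set (Mon σ × Mon σ)) :=
  {E | ∃ m q t, IsCircuit I m q ∧ t + m ≤ n ∧
      (∀ i ≤ m, p (t + i) = q i) ∧ E = edgeSet m q}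

section Aux
open Classical
variable {σ : Type}

lemma ann_prefix (I : MonIdeal σ) {m w : Mon σ} (h : w ∈ Ann I m) : ∃ r ∈ I.gens, w <+: r := by
  obtain ⟨hm, hw, ⟨a, r, b, hr, he⟩, hmin⟩ := h
  refine ⟨r, hr, ?_⟩
  have hwn : w ≠ [] := by
    rintro rfl
    exact hm ⟨a, r, b, hr, by simpa using he⟩
  have ha : a = [] := by
    cases a with
    | nil => rfl
    | cons x a' =>
      cases w with
      | nil => exact absurd rfl hwn
      | cons y w' =>
        exfalso
        refine hmin w' (List.suffix_cons y w') (by simp) ⟨a', r, b, hr, ?_⟩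
        simp only [List.cons_append, List.cons.injEq] at he
        simpa using he.2
  subst ha
  simp only [List.nil_append] at he
  have h1 : w <+: r ++ b := ⟨m, he⟩
  have h2 : r <+: r ++ b := ⟨b, rfl⟩
  rcases List.prefix_or_prefix_of_prefix h1 h2 with h | h
  · exact h
  · obtain ⟨c, hc⟩ := h
    exact absurd ⟨[], r, c, hr, by simp [hc]⟩ hw

lemma vert_finite [Finite σ] (I : MonIdeal σ) : (Vertices I).Finite := by
  have h1 : {m : Mon σ | m.length = 1}.Finite := List.finite_length_eq σ 1
  have h2 : (⋃ r ∈ I.gens, {w : Mon σ | w <+: r}).Finite := by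
    refine Set.Finite.biUnion I.gens.finite_toSet ?_
    intro r _
    refine (r.inits.toFinset.finite_toSet).subset ?_
    intro w hw
    simpa using hw
  refine (h1.union h2).subset ?_
  intro w hw
  obtain ⟨i, hi⟩ := Set.mem_iUnion.1 hw
  cases i with
  | zero => left; exact hi
  | succ i =>
    right
    simp only [Gs, Set.mem_iUnion] at hi
    obtain ⟨u, _, hu⟩ := hi
    obtain ⟨r, hr, h⟩ := ann_prefix I hu
    simp only [Set.mem_iUnion]
    exact ⟨r, hr, h⟩

lemma vert_edge (I : MonIdeal σ) {a b : Mon σ} (ha : a ∈ Vertices I) (h : Edge I a b) :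
    b ∈ Vertices I := by
  obtain ⟨i, hi⟩ := Set.mem_iUnion.1 ha
  refine Set.mem_iUnion.2 ⟨i+1, ?_⟩
  simp only [Gs, Set.mem_iUnion]
  exact ⟨a, hi, h⟩

lemma vert_reach (I : MonIdeal σ) {a b : Mon σ} (ha : a ∈ Vertices I)
    (h : Relation.ReflTransGen (Edge I) a b) : b ∈ Vertices I := by
  induction h with
  | refl => exact ha
  | tail _ h ih => exact vert_edge I ih h

lemma vert_one (I : MonIdeal σ) {a : Mon σ} (ha : a.length = 1) : a ∈ Vertices I :=
  Set.mem_iUnion.2 ⟨0, ha⟩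

lemma walk_reach (I : MonIdeal σ) {n : ℕ} {p : ℕ → Mon σ} (h : ∀ i < n, Edge I (p i) (p (i+1)))
    (i : ℕ) (hi : i ≤ n) : Relation.ReflTransGen (Edge I) (p 0) (p i) := by
  induction i with
  | zero => exact .refl
  | succ i ih => exact (ih (by omega)).tail (h i (by omega))

/-- prepend a vertex -/
def pre (v : Mon σ) (p : ℕ → Mon σ) : ℕ → Mon σ
  | 0 => v
  | (i+1) => p i

lemma reach_walk (I : MonIdeal σ) {a b : Mon σ} (h : Relation.ReflTransGen (Edge I) a b) :
    ∃ n, ∃ p : ℕ → Mon σ, p 0 = a ∧ p n = b ∧ ∀ i < n, Edge I (p i) (p (i+1)) := by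
  induction h using Relation.ReflTransGen.head_induction_on with
  | refl => exact ⟨0, fun _ => b, rfl, rfl, by simp⟩
  | head h _ ih =>
    rename_i x y _
    obtain ⟨n, p, h0, hn, hw⟩ := ih
    refine ⟨n+1, pre x p, rfl, hn, ?_⟩
    intro i hi
    cases i with
    | zero => simpa [pre, h0] using h
    | succ i => exact hw i (by omega)

lemma exists_circuit (I : MonIdeal σ) {v a : Mon σ} (hv : v ∈ Vertices I) (h : Edge I v a)
    (hr : Relation.ReflTransGen (Edge I) a v) :
    ∃ m q, IsCircuit I m q ∧ q 0 = v ∧ q 1 = a := by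
  have hex := reach_walk I hr
  obtain ⟨g, h0, hn, hw⟩ := Nat.find_spec hex
  have hmin := fun k (hk : k < Nat.find hex) => Nat.find_min hex hk
  generalize Nat.find hex = n at *
  have hlt : ∀ i < n, g i ≠ v := by
    intro i hi he
    exact hmin i hi ⟨g, h0, he, fun j hj => hw j (by omega)⟩
  have hinj : ∀ i j, i < j → j < n → g i ≠ g j := by
    intro i j hij hj he
    refine hmin (n - (j - i)) (by omega)
      ⟨fun x => if x ≤ i then g x else g (x + (j-i)), by simpa using h0, ?_, ?_⟩
    · have : ¬ (n - (j-i) ≤ i) := by omega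
      simp only [this, if_false]
      rw [show n - (j-i) + (j-i) = n by omega]; exact hn
    · intro x hx
      rcases lt_trichotomy x i with h | h | h
      · simp only [show x ≤ i by omega, show x + 1 ≤ i by omega, if_true]
        exact hw x (by omega)
      · subst h
        simp only [le_refl, if_true, show ¬ (x + 1 ≤ x) by omega, if_false]
        rw [he, show x + 1 + (j - x) = j + 1 by omega]
        exact hw j hj
      · simp only [show ¬ x ≤ i by omega, show ¬ x + 1 ≤ i by omega, if_false]
        rw [show x + 1 + (j-i) = x + (j-i) + 1 by omega]
        exact hw _ (by omega)
  refine ⟨n+1, pre v g, ⟨by omega, ⟨hv, ?_⟩, hn, ?_⟩, rfl, h0⟩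
  · intro i hi
    cases i with
    | zero => simpa [pre, h0] using h
    | succ i => exact hw i (by omega)
  · intro i hi j hj he
    cases i with
    | zero =>
      cases j with
      | zero => rfl
      | succ j => exact absurd he.symm (hlt j (by omega))
    | succ i =>
      cases j with
      | zero => exact absurd he (hlt i (by omega))
      | succ j =>
        have he' : g i = g j := he
        rcases lt_trichotomy i j with h | h | h
        · exact absurd he' (hinj i j h (by omega))
        · rw [h]
        · exact absurd he'.symm (hinj j i h (by omega))

lemma uniq_exit (I : MonIdeal σ) (hdisj : ¬ TwoCircuits I) {v a b : Mon σ} (hv : v ∈ Vertices I)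
    (h : Edge I v a) (hr : Relation.ReflTransGen (Edge I) a v)
    (h' : Edge I v b) (hr' : Relation.ReflTransGen (Edge I) b v) : a = b := by
  obtain ⟨m, q, hq, q0, q1⟩ := exists_circuit I hv h hr
  obtain ⟨m', q', hq', q0', q1'⟩ := exists_circuit I hv h' hr'
  have he : edgeSet m q = edgeSet m' q' := by
    by_contra hne
    exact hdisj ⟨m, q, m', q', hq, hq', ⟨0, hq.1, 0, hq'.1, by rw [q0, q0']⟩, hne⟩
  have : (v, b) ∈ edgeSet m q := by
    rw [he]
    exact ⟨0, hq'.1, by simp [q0', q1']⟩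
  obtain ⟨i, hi, hx⟩ := this
  simp only [Prod.mk.injEq] at hx
  have : i = 0 := hq.2.2.2 i hi 0 hq.1 (by rw [← hx.1, q0])
  subst this
  rw [hx.2, ← q1]

lemma circ_finite (I : MonIdeal σ) (n : ℕ) (p : ℕ → Mon σ) : (CircuitsIn I n p).Finite := by
  have : (((Finset.range (n+1)) ×ˢ (Finset.range (n+1))).image
    (fun x => edgeSet x.1 (fun i => p (x.2 + i))) : Set (Set (Mon σ × Mon σ))).Finite :=
    Finset.finite_toSet _
  refine this.subset ?_
  rintro E ⟨m, q, t, hq, ht, hp, rfl⟩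
  simp only [Finset.coe_image, Set.mem_image, Finset.mem_coe, Finset.mem_product, Finset.mem_range]
  refine ⟨(m, t), ⟨by simp; omega, by simp; omega⟩, ?_⟩
  ext e
  simp only [edgeSet, Set.mem_ofPred_eq]
  constructor
  · rintro ⟨i, hi, rfl⟩
    exact ⟨i, hi, by rw [hp i (by omega), hp (i+1) (by omega)]⟩
  · rintro ⟨i, hi, rfl⟩
    exact ⟨i, hi, by rw [hp i (by omega), hp (i+1) (by omega)]⟩

lemma circ_mono (I : MonIdeal σ) {n n' t : ℕ} {p p' : ℕ → Mon σ} (hn : t + n ≤ n')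
    (h : ∀ i ≤ n, p' (t + i) = p i) : CircuitsIn I n p ⊆ CircuitsIn I n' p' := by
  rintro E ⟨m, q, s, hq, hs, hp, rfl⟩
  refine ⟨m, q, t + s, hq, by omega, ?_, rfl⟩
  intro i hi
  rw [add_assoc, h _ (by omega), hp i hi]

/-- gluing walks -/
lemma glue (I : MonIdeal σ) {m n : ℕ} {q p : ℕ → Mon σ}
    (hq : ∀ i < m, Edge I (q i) (q (i+1))) (hp : ∀ i < n, Edge I (p i) (p (i+1)))
    (h : q m = p 0) : ∃ g : ℕ → Mon σ, (∀ i ≤ m, g i = q i) ∧ (∀ i, g (m + i) = p i) ∧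
      ∀ i < m + n, Edge I (g i) (g (i+1)) := by
  have h1 : ∀ i ≤ m, (fun x => if x ≤ m then q x else p (x - m)) i = q i := by
    intro i hi; simp [hi]
  have h2 : ∀ i, (fun x => if x ≤ m then q x else p (x - m)) (m + i) = p i := by
    intro i
    cases i with
    | zero => simpa using h
    | succ i => simp
  refine ⟨fun x => if x ≤ m then q x else p (x - m), h1, h2, ?_⟩
  intro i hi
  by_cases him : i < m
  · rw [h1 i him.le, h1 (i+1) him]; exact hq i him
  · obtain ⟨j, rfl⟩ := Nat.exists_eq_add_of_le (not_lt.1 him)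
    rw [h2 j, add_assoc, h2 (j+1)]; exact hp j (by omega)

/-- numerical count of walks of length n from v -/
noncomputable def wc (I : MonIdeal σ) (V : Finset (Mon σ)) : ℕ → Mon σ → ℕ
  | 0, _ => 1
  | (n+1), v => ∑ a ∈ V.filter (fun a => Edge I v a), wc I V n a

noncomputable def wf (I : MonIdeal σ) (V : Finset (Mon σ)) : ℕ → Mon σ → Finset (List (Mon σ))
  | 0, v => {[v]}
  | (n+1), v => (V.filter (fun a => Edge I v a)).biUnion
      (fun a => (wf I V n a).image (fun l => v :: l))

lemma wf_card (I : MonIdeal σ) (V : Finset (Mon σ)) (n : ℕ) (v : Mon σ) :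
    (wf I V n v).card ≤ wc I V n v := by
  induction n generalizing v with
  | zero => simp [wf, wc]
  | succ n ih =>
    simp only [wf, wc]
    refine Finset.card_biUnion_le.trans (Finset.sum_le_sum fun a _ => ?_)
    exact Finset.card_image_le.trans (ih a)

lemma mem_wf (I : MonIdeal σ) (V : Finset (Mon σ)) (hV : ∀ x, x ∈ V ↔ x ∈ Vertices I)
    (n : ℕ) (p : ℕ → Mon σ) (hp : IsWalk I n p) :
    (List.range (n+1)).map p ∈ wf I V n (p 0) := by
  induction n generalizing p with
  | zero => simp [wf]
  | succ n ih =>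
    have he : Edge I (p 0) (p 1) := hp.2 0 (by omega)
    have hv : p 1 ∈ Vertices I := vert_edge I hp.1 he
    have := ih (fun i => p (i+1)) ⟨hv, fun i hi => hp.2 (i+1) (by omega)⟩
    simp only [wf, Finset.mem_biUnion, Finset.mem_filter, Finset.mem_image]
    refine ⟨p 1, ⟨(hV _).2 hv, he⟩, _, this, ?_⟩
    rw [List.range_succ_eq_map (n := n+1)]
    simp [Function.comp_def]

lemma awalks_sub (I : MonIdeal σ) (V : Finset (Mon σ)) (hV : ∀ x, x ∈ V ↔ x ∈ Vertices I) (n : ℕ) :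
    AWalks I n ⊆ ((V.filter (fun v => v.length = 1)).biUnion (wf I V n) : Finset _) := by
  rintro l ⟨p, hp, ha, rfl⟩
  simp only [Finset.mem_coe, Finset.mem_biUnion, Finset.mem_filter]
  exact ⟨p 0, ⟨(hV _).2 hp.1, ha⟩, mem_wf I V hV n p hp⟩

lemma growth_le (I : MonIdeal σ) (V : Finset (Mon σ)) (hV : ∀ x, x ∈ V ↔ x ∈ Vertices I) (n : ℕ) :
    growth I n ≤ ∑ v ∈ V.filter (fun v => v.length = 1), wc I V n v := by
  have h := Set.ncard_le_ncard (awalks_sub I V hV n) (Finset.finite_toSet _)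
  rw [Set.ncard_coe_finset] at h
  refine h.trans (Finset.card_biUnion_le.trans (Finset.sum_le_sum fun a _ => wf_card I V n a))

/-- cumulative count -/
noncomputable def wF (I : MonIdeal σ) (V : Finset (Mon σ)) (N : ℕ) (v : Mon σ) : ℕ :=
  ∑ n ∈ Finset.range (N+1), wc I V n v

lemma wF_zero (I : MonIdeal σ) (V : Finset (Mon σ)) (v : Mon σ) : wF I V 0 v = 1 := by
  simp [wF, wc]

lemma wF_succ (I : MonIdeal σ) (V : Finset (Mon σ)) (N : ℕ) (v : Mon σ) :
    wF I V (N+1) v = 1 + ∑ a ∈ V.filter (fun a => Edge I v a), wF I V N a := by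
  unfold wF
  rw [Finset.sum_range_succ', Finset.sum_comm, add_comm]
  rfl

def CB (I : MonIdeal σ) (k : ℕ) (v : Mon σ) : Prop :=
  ∀ n p, p 0 = v → IsWalk I n p → (CircuitsIn I n p).ncard ≤ k

lemma upper (I : MonIdeal σ) (hdisj : ¬ TwoCircuits I) (V : Finset (Mon σ))
    (hV : ∀ x, x ∈ V ↔ x ∈ Vertices I) (s : ℕ) : ∀ v ∈ V,
    (V.filter (fun a => Relation.ReflTransGen (Edge I) v a)).card = s →
    ∀ k, CB I k v → ∃ c, ∀ N, wF I V N v ≤ c * (N+1)^k := by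
  induction s using Nat.strong_induction_on with
  | _ s ih =>
  intro v hvV hs k hk
  have hv := (hV v).1 hvV
  have hlt : ∀ a, Relation.ReflTransGen (Edge I) v a → ¬ Relation.ReflTransGen (Edge I) a v →
      (V.filter (fun b => Relation.ReflTransGen (Edge I) a b)).card < s := by
    intro a hva hav
    rw [← hs]
    refine Finset.card_lt_card ⟨?_, ?_⟩
    · intro b hb
      simp only [Finset.mem_filter] at hb ⊢
      exact ⟨hb.1, hva.trans hb.2⟩
    · intro hsub
      have : v ∈ V.filter (fun b => Relation.ReflTransGen (Edge I) a b) :=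
        hsub (by simp only [Finset.mem_filter]; exact ⟨hvV, .refl⟩)
      exact hav (Finset.mem_filter.1 this).2
  by_cases hc : ∃ a, Edge I v a ∧ Relation.ReflTransGen (Edge I) a v
  · obtain ⟨a₀, ha₀, hra₀⟩ := hc
    obtain ⟨m, q, hq, q0, q1⟩ := exists_circuit I hv ha₀ hra₀
    have hk1 : 1 ≤ k := by
      refine le_trans ?_ (hk m q q0 hq.2.1)
      rw [Nat.one_le_iff_ne_zero, Ne, Set.ncard_eq_zero (circ_finite I m q)]
      exact Set.Nonempty.ne_empty ⟨_, m, q, 0, hq, by omega, by simp, rfl⟩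
    obtain ⟨k, rfl⟩ : ∃ k', k = k' + 1 := ⟨k - 1, by omega⟩
    have hcb : ∀ a, Relation.ReflTransGen (Edge I) v a → ¬ Relation.ReflTransGen (Edge I) a v →
        CB I k a := by
      intro a hva hav n p p0 hp
      obtain ⟨n₁, p₁, h10, h1n, hw1⟩ := reach_walk I hva
      obtain ⟨g, g1, g2, g3⟩ := glue I hw1 hp.2 (by rw [h1n, p0])
      obtain ⟨f, f1, f2, f3⟩ := glue I hq.2.1.2 g3 (by rw [hq.2.2.1, q0, g1 0 (by omega), h10])
      have f0 : f 0 = v := by rw [f1 0 (by omega), q0]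
      have hfk := hk _ f f0 ⟨by rw [f0]; exact hv, f3⟩
      have hsub : CircuitsIn I n p ⊆ CircuitsIn I (m + (n₁ + n)) f :=
        circ_mono I (t := m + n₁) (by omega) (fun i _ => by rw [add_assoc, f2, g2])
      have hmem : edgeSet m q ∈ CircuitsIn I (m + (n₁ + n)) f :=
        ⟨m, q, 0, hq, by omega, fun i hi => by rw [zero_add, f1 i hi], rfl⟩
      have hnot : edgeSet m q ∉ CircuitsIn I n p := by
        rintro ⟨m', q', t, hq', ht, hpq, he⟩
        have : (v, q 1) ∈ edgeSet m q := ⟨0, hq.1, by simp [q0]⟩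
        rw [he] at this
        obtain ⟨i, hi, hx⟩ := this
        simp only [Prod.mk.injEq] at hx
        apply hav
        rw [hx.1, ← hpq i hi.le, ← p0]
        exact walk_reach I hp.2 _ (by omega)
      have h1 := Set.ncard_le_ncard (Set.insert_subset hmem hsub) (circ_finite I _ f)
      rw [Set.ncard_insert_of_notMem hnot (circ_finite I n p)] at h1
      omega
    have hex : ∀ a, ∃ c, Relation.ReflTransGen (Edge I) v a →
        ¬ Relation.ReflTransGen (Edge I) a v → ∀ N, wF I V N a ≤ c * (N+1)^k := by
      intro a
      by_cases h : Relation.ReflTransGen (Edge I) v a ∧ ¬ Relation.ReflTransGen (Edge I) a v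
      · obtain ⟨c, hc⟩ := ih _ (hlt a h.1 h.2) a ((hV a).2 (vert_reach I hv h.1)) rfl k
          (hcb a h.1 h.2)
        exact ⟨c, fun _ _ => hc⟩
      · exact ⟨0, fun h1 h2 => absurd ⟨h1, h2⟩ h⟩
    choose c hc using hex
    set M := 1 + ∑ a ∈ V, c a with hM
    have key : ∀ N u, Relation.ReflTransGen (Edge I) v u → Relation.ReflTransGen (Edge I) u v →
        wF I V N u ≤ M * (N+1)^(k+1) := by
      intro N
      induction N with
      | zero => intro u _ _; rw [wF_zero]; simp [hM]
      | succ N ihN =>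
        intro u hvu huv
        have hu := vert_reach I hv hvu
        rw [wF_succ, ← Finset.sum_filter_add_sum_filter_not _
          (fun a => Relation.ReflTransGen (Edge I) a v)]
        have hA : ∑ a ∈ (V.filter (fun a => Edge I u a)).filter
            (fun a => Relation.ReflTransGen (Edge I) a v), wF I V N a ≤ M * (N+1)^(k+1) := by
          have hcard : ((V.filter (fun a => Edge I u a)).filter
            (fun a => Relation.ReflTransGen (Edge I) a v)).card ≤ 1 := by
            rw [Finset.card_le_one]
            intro a ha b hb
            simp only [Finset.mem_filter] at ha hb
            exact uniq_exit I hdisj hu ha.1.2 (ha.2.trans hvu) hb.1.2 (hb.2.trans hvu)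
          refine (Finset.sum_le_card_nsmul _ _ (M * (N+1)^(k+1)) ?_).trans ?_
          · intro a ha
            simp only [Finset.mem_filter] at ha
            exact ihN a (hvu.tail ha.1.2) ha.2
          · rw [smul_eq_mul]
            calc _ ≤ 1 * (M * (N+1)^(k+1)) := Nat.mul_le_mul_right _ hcard
              _ = _ := one_mul _
        have hB : ∑ a ∈ (V.filter (fun a => Edge I u a)).filter
            (fun a => ¬ Relation.ReflTransGen (Edge I) a v), wF I V N a
              ≤ (∑ a ∈ V, c a) * (N+1)^k := by
          rw [Finset.sum_mul]
          refine (Finset.sum_le_sum (g := fun a => c a * (N+1)^k) ?_).trans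
            (Finset.sum_le_sum_of_subset ?_)
          · intro a ha
            simp only [Finset.mem_filter] at ha
            exact hc a (hvu.tail ha.1.2) ha.2 N
          · exact (Finset.filter_subset _ _).trans (Finset.filter_subset _ _)
        have hpos : 1 ≤ (N+1)^k := Nat.one_le_pow _ _ (by omega)
        have hmono : (N+1)^k ≤ (N+1+1)^k := Nat.pow_le_pow_left (by omega) k
        calc _ ≤ (N+1)^k + (M * (N+1)^(k+1) + (∑ a ∈ V, c a) * (N+1)^k) := by omega
          _ = M * ((N+1)^k * (N+1+1)) := by rw [hM]; ring
          _ ≤ M * ((N+1+1)^k * (N+1+1)) := by gcongr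
          _ = _ := by rw [pow_succ]
    exact ⟨M, fun N => key N v .refl .refl⟩
  · push Not at hc
    have hex : ∀ a, ∃ c, Edge I v a → ∀ N, wF I V N a ≤ c * (N+1)^k := by
      intro a
      by_cases h : Edge I v a
      · have hcb : CB I k a := by
          intro n p p0 hp
          have hw : IsWalk I (n+1) (pre v p) := by
            refine ⟨hv, ?_⟩
            intro i hi
            cases i with
            | zero => simpa [pre, p0] using h
            | succ i => exact hp.2 i (by omega)
          refine le_trans (Set.ncard_le_ncard ?_ (circ_finite I _ _)) (hk (n+1) (pre v p) rfl hw)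
          exact circ_mono I (t := 1) (by omega) (fun i _ => by rw [add_comm]; rfl)
        obtain ⟨c, hc'⟩ := ih _ (hlt a (.single h) (hc a h)) a ((hV a).2 (vert_edge I hv h)) rfl k hcb
        exact ⟨c, fun _ => hc'⟩
      · exact ⟨0, fun h1 => absurd h1 h⟩
    choose c hc' using hex
    refine ⟨1 + ∑ a ∈ V, c a, ?_⟩
    intro N
    cases N with
    | zero => rw [wF_zero]; simp
    | succ N =>
      rw [wF_succ]
      have hB : ∑ a ∈ V.filter (fun a => Edge I v a), wF I V N a ≤ (∑ a ∈ V, c a) * (N+1)^k := by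
        rw [Finset.sum_mul]
        refine (Finset.sum_le_sum (g := fun a => c a * (N+1)^k) ?_).trans
          (Finset.sum_le_sum_of_subset (Finset.filter_subset _ _))
        intro a ha
        exact hc' a (Finset.mem_filter.1 ha).2 N
      have hpos : 1 ≤ (N+1)^k := Nat.one_le_pow _ _ (by omega)
      calc _ ≤ (N+1)^k + (∑ a ∈ V, c a) * (N+1)^k := by omega
        _ = (1 + ∑ a ∈ V, c a) * (N+1)^k := by ring
        _ ≤ _ := by gcongr; omega

/-- pumping -/
def pump (L s : List (Mon σ)) : ℕ → List (Mon σ)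
  | 0 => s
  | (j+1) => L ++ pump L s j

lemma pump_count (L s : List (Mon σ)) (u : Mon σ) (j : ℕ) :
    (pump L s j).count u = j * L.count u + s.count u := by
  induction j with
  | zero => simp [pump]
  | succ j ih => simp [pump, ih]; ring

lemma pump_length (L s : List (Mon σ)) (j : ℕ) :
    (pump L s j).length = j * L.length + s.length := by
  induction j with
  | zero => simp [pump]
  | succ j ih => simp [pump, ih]; ring

lemma pump_inj (L : List (Mon σ)) {s s' : List (Mon σ)} (j : ℕ)
    (h : pump L s j = pump L s' j) : s = s' := by
  induction j with
  | zero => exact h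
  | succ j ih => exact ih (List.append_cancel_left h)

lemma pump_chain (R : Mon σ → Mon σ → Prop) (L s : List (Mon σ)) (v : Mon σ)
    (hL : L.IsChain R) (hLv : L.head? = some v) (hl : ∀ x ∈ L.getLast?, R x v)
    (hs : s.IsChain R) (hsv : s.head? = some v) (j : ℕ) :
    (pump L s j).IsChain R ∧ (pump L s j).head? = some v := by
  induction j with
  | zero => exact ⟨hs, hsv⟩
  | succ j ih =>
    constructor
    · simp only [pump]
      rw [List.isChain_append]
      refine ⟨hL, ih.1, ?_⟩
      intro x hx y hy
      rw [ih.2] at hy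
      simp only [Option.mem_def, Option.some.injEq] at hy
      subst hy
      exact hl x hx
    · simp [pump, hLv]

lemma lower (I : MonIdeal σ) (hdisj : ¬ TwoCircuits I) (n : ℕ) : ∀ p, IsWalk I n p →
    ∃ K : ℕ, ∀ M : ℕ, ∃ S : Finset (List (Mon σ)),
      S.card = M ^ (CircuitsIn I n p).ncard ∧
      (∀ l ∈ S, l.length ≤ K * (M+1) ∧ l.IsChain (Edge I) ∧ l.head? = some (p 0)) ∧
      ∀ u, (∀ E ∈ CircuitsIn I n p, ∀ e ∈ E, e.1 ≠ u) → ∃ c, ∀ l ∈ S, l.count u = c := by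
  induction n with
  | zero =>
    intro p hp
    refine ⟨1, fun M => ⟨{[p 0]}, ?_, ?_, ?_⟩⟩
    · have : CircuitsIn I 0 p = ∅ := by
        ext E
        simp only [Set.mem_empty_iff_false, iff_false]
        rintro ⟨m, q, t, hq, ht, -⟩
        have := hq.1
        omega
      simp [this]
    · simp
    · intro u _
      exact ⟨[p 0].count u, by simp⟩
  | succ n ih =>
    intro p hp
    have he : Edge I (p 0) (p 1) := hp.2 0 (by omega)
    have hp' : IsWalk I n (fun i => p (i+1)) :=
      ⟨vert_edge I hp.1 he, fun i hi => hp.2 (i+1) (by omega)⟩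
    obtain ⟨K, hK⟩ := ih _ hp'
    have hsub : CircuitsIn I n (fun i => p (i+1)) ⊆ CircuitsIn I (n+1) p :=
      circ_mono I (t := 1) (by omega) (fun i _ => by rw [add_comm])
    have hzero : ∀ m q t, IsCircuit I m q → t + m ≤ n + 1 → (∀ i ≤ m, p (t + i) = q i) →
        edgeSet m q ∉ CircuitsIn I n (fun i => p (i+1)) → t = 0 := by
      intro m q t hq ht hpq hn
      by_contra h0
      obtain ⟨t, rfl⟩ : ∃ t', t = t' + 1 := ⟨t-1, by omega⟩
      refine hn ⟨m, q, t, hq, by omega, ?_, rfl⟩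
      intro i hi
      rw [← hpq i hi]
      show p (t + i + 1) = p (t + 1 + i)
      rw [show t + i + 1 = t + 1 + i by omega]
    by_cases hdrop : ∃ E ∈ CircuitsIn I (n+1) p, E ∉ CircuitsIn I n (fun i => p (i+1))
    · obtain ⟨E, ⟨m, q, t, hq, ht, hpq, rfl⟩, hE⟩ := hdrop
      obtain rfl := hzero m q t hq ht hpq hE
      simp only [zero_add] at hpq ht
      have hmpos := hq.1
      have q0 : q 0 = p 0 := (hpq 0 (by omega)).symm
      have heq : CircuitsIn I (n+1) p =
          insert (edgeSet m q) (CircuitsIn I n (fun i => p (i+1))) := by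
        apply Set.Subset.antisymm
        · intro F hF
          by_cases hF' : F ∈ CircuitsIn I n (fun i => p (i+1))
          · exact Or.inr hF'
          · left
            obtain ⟨m', q', t', hq', ht', hpq', rfl⟩ := hF
            obtain rfl := hzero m' q' t' hq' ht' hpq' hF'
            by_contra hne
            refine hdisj ⟨m', q', m, q, hq', hq, ⟨0, hq'.1, 0, hq.1, ?_⟩, hne⟩
            rw [q0, ← hpq' 0 (by omega)]
        · refine Set.insert_subset ?_ hsub
          exact ⟨m, q, 0, hq, by omega, by simpa using hpq, rfl⟩
      have hcard : (CircuitsIn I (n+1) p).ncard =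
          (CircuitsIn I n (fun i => p (i+1))).ncard + 1 := by
        rw [heq, Set.ncard_insert_of_notMem hE (circ_finite I _ _)]
      set L := (List.range m).map p with hLdef
      have hLlen : L.length = m := by simp [hLdef]
      have hLmem : ∀ x, x ∈ L → ∃ e ∈ edgeSet m q, e.1 = x := by
        intro x hx
        simp only [hLdef, List.mem_map, List.mem_range] at hx
        obtain ⟨i, hi, rfl⟩ := hx
        exact ⟨_, ⟨i, hi, rfl⟩, (hpq i hi.le).symm⟩
      have hLchain : L.IsChain (Edge I) := by
        rw [List.isChain_iff_getElem]
        intro i hi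
        simp only [hLdef, List.getElem_map, List.getElem_range]
        exact hp.2 i (by omega)
      have hLhead : L.head? = some (p 0) := by
        obtain ⟨m', rfl⟩ : ∃ m', m = m' + 1 := ⟨m-1, by omega⟩
        simp [hLdef, List.range_succ_eq_map]
      have hLlast : ∀ x ∈ L.getLast?, Edge I x (p 0) := by
        obtain ⟨m', rfl⟩ : ∃ m', m = m' + 1 := ⟨m-1, by omega⟩
        intro x hx
        simp only [hLdef, List.range_succ, List.map_append, List.map_cons, List.map_nil,
          List.getLast?_append, List.getLast?_singleton, Option.some_or, Option.mem_def,
          Option.some.injEq] at hx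
        subst hx
        have := hp.2 m' (by omega)
        rwa [hpq (m'+1) le_rfl, hq.2.2.1, q0] at this
      have hLcount : 0 < L.count (p 0) := by
        rw [List.count_pos_iff]
        simp only [hLdef, List.mem_map, List.mem_range]
        exact ⟨0, hmpos, rfl⟩
      refine ⟨m + K + 1, fun M => ?_⟩
      obtain ⟨S, hS, hSl, hSu⟩ := hK M
      have hvc : ∃ c, ∀ l ∈ S, l.count (p 0) = c := by
        apply hSu
        rintro F ⟨m', q', t', hq', ht', hpq', rfl⟩ e ⟨i, hi, rfl⟩ hev
        simp only at hev
        apply hE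
        have : edgeSet m q = edgeSet m' q' := by
          by_contra hne
          exact hdisj ⟨m, q, m', q', hq, hq', ⟨0, hmpos, i, hi, by rw [q0, hev]⟩, hne⟩
        rw [this]
        exact ⟨m', q', t', hq', ht', hpq', rfl⟩
      obtain ⟨cv, hcv⟩ := hvc
      refine ⟨((Finset.range M) ×ˢ S).image (fun x => pump L (p 0 :: x.2) x.1), ?_, ?_, ?_⟩
      · rw [Finset.card_image_of_injOn, Finset.card_product, hS, hcard, Finset.card_range, pow_succ,
          mul_comm]
        rintro ⟨j, s⟩ hx ⟨j', s'⟩ hx' hxx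
        simp only [Finset.coe_product, Set.mem_prod, Finset.mem_coe] at hx hx'
        simp only at hxx
        have hc := congrArg (List.count (p 0)) hxx
        rw [pump_count, pump_count, List.count_cons_self, List.count_cons_self, hcv s hx.2,
          hcv s' hx'.2] at hc
        have hj : j = j' := Nat.eq_of_mul_eq_mul_right hLcount (by omega)
        subst hj
        have := pump_inj L j hxx
        simp only [List.cons.injEq, true_and] at this
        rw [this]
      · intro l hl
        simp only [Finset.mem_image, Finset.mem_product, Finset.mem_range] at hl
        obtain ⟨⟨j, s⟩, ⟨hj, hs⟩, rfl⟩ := hl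
        simp only at hj hs ⊢
        obtain ⟨h1, h2, h3⟩ := hSl s hs
        refine ⟨?_, pump_chain (Edge I) L (p 0 :: s) (p 0) hLchain hLhead hLlast ?_ rfl j⟩
        · rw [pump_length, hLlen, List.length_cons]
          have : j * m ≤ M * m := Nat.mul_le_mul_right _ hj.le
          nlinarith
        · rw [List.isChain_cons]
          refine ⟨?_, h2⟩
          intro y hy
          rw [h3] at hy
          simp only [Option.mem_def, Option.some.injEq, zero_add] at hy
          subst hy
          exact he
      · intro u hu
        obtain ⟨c, hc⟩ := hSu u (fun F hF => hu F (hsub hF))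
        have hL0 : L.count u = 0 := by
          rw [List.count_eq_zero]
          intro hmem
          obtain ⟨e, hee, hx⟩ := hLmem u hmem
          exact hu (edgeSet m q) (by rw [heq]; exact Or.inl rfl) e hee hx
        refine ⟨c + if p 0 == u then 1 else 0, ?_⟩
        intro l hl
        simp only [Finset.mem_image, Finset.mem_product, Finset.mem_range] at hl
        obtain ⟨⟨j, s⟩, ⟨hj, hs⟩, rfl⟩ := hl
        simp only at hs ⊢
        rw [pump_count, hL0, List.count_cons, hc s hs]
        ring
    · push Not at hdrop
      have heq : CircuitsIn I (n+1) p = CircuitsIn I n (fun i => p (i+1)) :=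
        Set.Subset.antisymm hdrop hsub
      refine ⟨K + 1, fun M => ?_⟩
      obtain ⟨S, hS, hSl, hSu⟩ := hK M
      refine ⟨S.image (fun l => p 0 :: l), ?_, ?_, ?_⟩
      · rw [Finset.card_image_of_injective _ (List.cons_injective), hS, heq]
      · intro l hl
        obtain ⟨s, hs, rfl⟩ := Finset.mem_image.1 hl
        obtain ⟨h1, h2, h3⟩ := hSl s hs
        refine ⟨?_, ?_, rfl⟩
        · rw [List.length_cons]; nlinarith
        · rw [List.isChain_cons]
          refine ⟨?_, h2⟩
          intro y hy
          rw [h3] at hy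
          simp only [Option.mem_def, Option.some.injEq, zero_add] at hy
          subst hy
          exact he
      · intro u hu
        rw [heq] at hu
        obtain ⟨c, hc⟩ := hSu u hu
        refine ⟨c + if p 0 == u then 1 else 0, ?_⟩
        intro l hl
        obtain ⟨s, hs, rfl⟩ := Finset.mem_image.1 hl
        rw [List.count_cons, hc s hs]

lemma mem_awalks (I : MonIdeal σ) (l : List (Mon σ)) (v : Mon σ) (hv : v.length = 1)
    (hl : l.IsChain (Edge I)) (hh : l.head? = some v) : l ∈ AWalks I (l.length - 1) := by
  have hne : l ≠ [] := by rintro rfl; simp at hh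
  have hpos : 0 < l.length := List.length_pos_iff.2 hne
  have h0 : l.getD 0 [] = v := by
    cases l with
    | nil => simp at hh
    | cons x l => simpa using hh
  refine ⟨fun i => l.getD i [], ⟨?_, ?_⟩, ?_, ?_⟩
  · simp only [h0]; exact vert_one I hv
  · intro i hi
    rw [List.isChain_iff_getElem] at hl
    have := hl i (by omega)
    simp only [List.getD_eq_getElem?_getD]
    rw [List.getElem?_eq_getElem (by omega), List.getElem?_eq_getElem (by omega)]
    exact this
  · unfold Anchored; simp only [h0]; exact hv
  · apply List.ext_getElem
    · simp; omega
    · intro i h1 h2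
      simp [h1]

end Aux

/-- Corollary 2.9(3): if no two distinct circuits of Γ(A) share a vertex, then
    GKdim E(A) equals the maximal number of distinct circuits contained in an
    anchored walk (GKdim being the least polynomial-growth exponent of the
    dimension partial sums of E(A)). -/
theorem stmt11 {σ : Type} [Finite σ] (I : MonIdeal σ)
    (hdisj : ¬ TwoCircuits I) (d : ℕ)
    (hd : IsGreatest {m : ℕ | ∃ n : ℕ, ∃ p : ℕ → Mon σ, IsWalk I n p ∧ Anchored p ∧
        (CircuitsIn I n p).ncard = m} d) :
    IsLeast {e : ℕ | ∃ c : ℕ, 0 < c ∧ ∀ n : ℕ,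
        (Finset.range (n+1)).sum (growth I) ≤ c * (n+1) ^ e} d := by
  classical
  have hfin := vert_finite I
  set V := hfin.toFinset with hVdef
  have hV : ∀ x, x ∈ V ↔ x ∈ Vertices I := by intro x; simp [hVdef]
  constructor
  · have hex : ∀ v : Mon σ, ∃ c, v.length = 1 → ∀ N, wF I V N v ≤ c * (N+1)^d := by
      intro v
      by_cases h : v.length = 1
      · have hcb : CB I d v := by
          intro n p p0 hp
          exact hd.2 ⟨n, p, hp, by unfold Anchored; rw [p0]; exact h, rfl⟩
        obtain ⟨c, hc⟩ := upper I hdisj V hV _ v ((hV v).2 (vert_one I h)) rfl d hcb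
        exact ⟨c, fun _ => hc⟩
      · exact ⟨0, fun h' => absurd h' h⟩
    choose c hc using hex
    refine ⟨1 + ∑ v ∈ V.filter (fun v => v.length = 1), c v, by omega, ?_⟩
    intro N
    calc (Finset.range (N+1)).sum (growth I)
        ≤ ∑ n ∈ Finset.range (N+1), ∑ v ∈ V.filter (fun v => v.length = 1), wc I V n v :=
          Finset.sum_le_sum fun n _ => by convert growth_le I V hV n
      _ = ∑ v ∈ V.filter (fun v => v.length = 1), wF I V N v := Finset.sum_comm
      _ ≤ ∑ v ∈ V.filter (fun v => v.length = 1), c v * (N+1)^d :=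
          Finset.sum_le_sum fun v hv => hc v (Finset.mem_filter.1 hv).2 N
      _ = (∑ v ∈ V.filter (fun v => v.length = 1), c v) * (N+1)^d := by rw [Finset.sum_mul]
      _ ≤ _ := Nat.mul_le_mul_right _ (by omega)
  · rintro e ⟨c, hc0, hc⟩
    obtain ⟨n, p, hp, ha, hcard⟩ := hd.1
    obtain ⟨K, hK⟩ := lower I hdisj n p hp
    have hmain : ∀ M, M ^ d ≤ c * (K * (M+1) + 1) ^ e := by
      intro M
      obtain ⟨S, hS, hSl, -⟩ := hK M
      rw [hcard] at hS
      refine le_trans ?_ (hc (K * (M+1)))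
      have hAf : ∀ n, (AWalks I n).Finite := fun n =>
        (Finset.finite_toSet _).subset (awalks_sub I V hV n)
      have hsub : S ⊆ (Finset.range (K * (M+1) + 1)).biUnion (fun n => (hAf n).toFinset) := by
        intro l hl
        obtain ⟨h1, h2, h3⟩ := hSl l hl
        simp only [Finset.mem_biUnion, Finset.mem_range, Set.Finite.mem_toFinset]
        exact ⟨l.length - 1, by omega, mem_awalks I l (p 0) ha h2 h3⟩
      rw [← hS]
      refine (Finset.card_le_card hsub).trans (Finset.card_biUnion_le.trans ?_)
      refine Finset.sum_le_sum fun n _ => ?_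
      rw [growth, Set.ncard_eq_toFinset_card _ (hAf n)]
    by_contra hlt
    push Not at hlt
    set B := c * (2 * K + 1) ^ e with hB
    have h := hmain (B + 1)
    have h1 : (B+1)^(e+1) ≤ (B+1)^d := Nat.pow_le_pow_right (by omega) hlt
    have h2 : c * (K * (B+1+1) + 1) ^ e ≤ c * ((2*K+1) * (B+1)) ^ e := by
      gcongr
      nlinarith
    have h3 : c * ((2*K+1) * (B+1)) ^ e = B * (B+1)^e := by rw [hB, mul_pow]; ring
    have h4 : (B+1)^(e+1) = B * (B+1)^e + (B+1)^e := by ring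
    have h5 : 0 < (B+1)^e := by positivity
    omega

end CPS
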